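/- arXiv:1909.12556 — 5 statements merged into one kernel-verified Lean document; each statement's English description precedes it below -/
import Mathlib

section
/- Let γ > 0, let F : (0,∞) × ℝ → ℝ be C² (playing the role of the interpolated bulk free energy density ρψ), and let W(s) = s²(1−s)². Suppose ρ : ℝ → (0,∞) and φ : ℝ → ℝ are twice continuously differentiable and satisfy, for all x ∈ ℝ, the planar equilibrium equations d/dx[ −F(ρ(x),φ(x)) − (1/γ)W(φ(x)) − (γ/2)φ′(x)² + ρ(x)·∂F/∂ρ(ρ(x),φ(x)) ] = −γ d/dx[ φ′(x)² ] and (1/γ)W′(φ(x)) + ∂F/∂φ(ρ(x),φ(x)) = γ φ″(x). Then the function x ↦ ∂F/∂ρ(ρ(x),φ(x)) is constant on ℝ. -/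
open Set

/-- **Constancy of the generalized chemical potential along a planar equilibrium profile.**
For a planar static equilibrium of the compressible Navier–Stokes–Allen–Cahn model with
free energy density `F(ρ,φ) + (1/γ) W(φ) + (γ/2) φ′²`, the quantity `∂F/∂ρ (ρ(x), φ(x))`
is constant on `ℝ`. -/
theorem chemical_potential_constant
    (γ : ℝ) (hγ : 0 < γ)
    (F : ℝ → ℝ → ℝ)
    (hF : ContDiffOn ℝ 2 (fun p : ℝ × ℝ => F p.1 p.2) (Ioi (0:ℝ) ×ˢ (univ : Set ℝ)))
    (W : ℝ → ℝ) (hW : W = fun s => s ^ 2 * (1 - s) ^ 2)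
    (ρ φ : ℝ → ℝ)
    (hρ : ContDiff ℝ 2 ρ) (hφ : ContDiff ℝ 2 φ)
    (hρpos : ∀ x, 0 < ρ x)
    (ode1 : ∀ x : ℝ,
      deriv (fun y =>
          -F (ρ y) (φ y) - (1/γ) * W (φ y) - (γ/2) * (deriv φ y) ^ 2
            + ρ y * deriv (fun r => F r (φ y)) (ρ y)) x
        = -γ * deriv (fun y => (deriv φ y) ^ 2) x)
    (ode2 : ∀ x : ℝ,
      (1/γ) * deriv W (φ x) + deriv (fun s => F (ρ x) s) (φ x)
        = γ * deriv (deriv φ) x) :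
    ∀ x y : ℝ, deriv (fun r => F r (φ x)) (ρ x) = deriv (fun r => F r (φ y)) (ρ y) := by
  have hopen : IsOpen (Ioi (0:ℝ) ×ˢ (univ : Set ℝ)) := isOpen_Ioi.prod isOpen_univ
  have hmem : ∀ x, (ρ x, φ x) ∈ Ioi (0:ℝ) ×ˢ (univ : Set ℝ) := fun x => ⟨hρpos x, mem_univ _⟩
  have hcd : ∀ x, ContDiffAt ℝ 2 (fun p : ℝ × ℝ => F p.1 p.2) (ρ x, φ x) := fun x =>
    hF.contDiffAt (hopen.mem_nhds (hmem x))
  set G : ℝ × ℝ → ℝ := fun p : ℝ × ℝ => F p.1 p.2 with hG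
  have hGd : ∀ x, HasFDerivAt G (fderiv ℝ G (ρ x, φ x)) (ρ x, φ x) := fun x =>
    ((hcd x).differentiableAt (by norm_num)).hasFDerivAt
  have h1 : ∀ x, deriv (fun r => F r (φ x)) (ρ x) = fderiv ℝ G (ρ x, φ x) (1, 0) := by
    intro x
    have := (hGd x).comp_hasDerivAt (f := fun r => (r, φ x)) (ρ x)
      ((hasDerivAt_id (ρ x)).prodMk (hasDerivAt_const (ρ x) (φ x)))
    exact this.deriv
  have h2 : ∀ x, deriv (fun s => F (ρ x) s) (φ x) = fderiv ℝ G (ρ x, φ x) (0, 1) := by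
    intro x
    have := (hGd x).comp_hasDerivAt (f := fun s => (ρ x, s)) (φ x)
      ((hasDerivAt_const (φ x) (ρ x)).prodMk (hasDerivAt_id (φ x)))
    exact this.deriv
  have hρd : ∀ x, HasDerivAt ρ (deriv ρ x) x := fun x =>
    ((hρ.differentiable (by norm_num)) x).hasDerivAt
  have hφd : ∀ x, HasDerivAt φ (deriv φ x) x := fun x =>
    ((hφ.differentiable (by norm_num)) x).hasDerivAt
  have hφ1 : ContDiff ℝ 1 (deriv φ) := by
    have h : ContDiff ℝ (1 + 1) φ := by simpa [one_add_one_eq_two] using hφ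
    exact (contDiff_succ_iff_deriv.1 h).2.2
  have hφdd : ∀ x, HasDerivAt (deriv φ) (deriv (deriv φ) x) x := fun x =>
    ((hφ1.differentiable (by norm_num)) x).hasDerivAt
  have hm : Differentiable ℝ (fun y => deriv (fun r => F r (φ y)) (ρ y)) := by
    intro x
    simp only [h1]
    have hf : DifferentiableAt ℝ (fderiv ℝ G) (ρ x, φ x) :=
      ((hcd x).fderiv_right (m := 1) (by norm_num [one_add_one_eq_two])).differentiableAt
        (by norm_num)
    have hc : DifferentiableAt ℝ (fun y => fderiv ℝ G (ρ y, φ y)) x :=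
      DifferentiableAt.comp x (g := fderiv ℝ G) (f := fun y => (ρ y, φ y)) hf
        ((hρd x).differentiableAt.prodMk (hφd x).differentiableAt)
    exact hc.clm_apply (differentiableAt_const _)
  have hWd : ∀ s, HasDerivAt W (deriv W s) s := by
    intro s
    apply DifferentiableAt.hasDerivAt
    rw [hW]
    fun_prop
  have hzero : ∀ x, deriv (fun y => deriv (fun r => F r (φ y)) (ρ y)) x = 0 := by
    intro x
    have hFx : HasDerivAt (fun y => F (ρ y) (φ y))
        (fderiv ℝ G (ρ x, φ x) (deriv ρ x, deriv φ x)) x :=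
      (hGd x).comp_hasDerivAt (f := fun y => (ρ y, φ y)) x ((hρd x).prodMk (hφd x))
    have hsplit : fderiv ℝ G (ρ x, φ x) (deriv ρ x, deriv φ x)
        = deriv ρ x * fderiv ℝ G (ρ x, φ x) (1, 0)
          + deriv φ x * fderiv ℝ G (ρ x, φ x) (0, 1) := by
      have : ((deriv ρ x, deriv φ x) : ℝ × ℝ)
          = deriv ρ x • ((1, 0) : ℝ × ℝ) + deriv φ x • ((0, 1) : ℝ × ℝ) := by simp
      rw [this, map_add, map_smul, map_smul, smul_eq_mul, smul_eq_mul]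
    have hsq : HasDerivAt (fun y => (deriv φ y) ^ 2)
        (2 * deriv φ x * deriv (deriv φ) x) x := by
      have h := (hφdd x).fun_pow 2
      simpa using h
    have hWφ : HasDerivAt (fun y => W (φ y)) (deriv W (φ x) * deriv φ x) x :=
      (hWd (φ x)).comp x (hφd x)
    have hL := ((hFx.neg.sub (hWφ.const_mul (1/γ))).sub (hsq.const_mul (γ/2))).add
      ((hρd x).mul (hm x).hasDerivAt)
    have e1 := ode1 x
    have e2 := ode2 x
    rw [hsq.deriv] at e1
    have e3 := hL.deriv.symm.trans e1
    rw [hsplit, ← h1, ← h2] at e3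
    have hne := (hρpos x).ne'
    have : ρ x * deriv (fun y => deriv (fun r => F r (φ y)) (ρ y)) x = 0 := by
      linear_combination e3 + deriv φ x * e2
    exact (mul_eq_zero.1 this).resolve_left hne
  intro x y
  exact is_const_of_deriv_eq_zero hm hzero x y
end

section
/- Let γ > 0, let F : (0,∞) × ℝ → ℝ be C², and let W(s) = s²(1−s)². Suppose ρ : ℝ → (0,∞) and φ : ℝ → ℝ are twice continuously differentiable and satisfy, for all x ∈ ℝ, d/dx[ −F(ρ,φ) − (1/γ)W(φ) − (γ/2)φ′² + ρ·∂F/∂ρ(ρ,φ) ] = −γ d/dx[ φ′² ] and (1/γ)W′(φ) + ∂F/∂φ(ρ,φ) = γ φ″. Assume furthermore the far-field conditions ρ(x) → ρ_V, φ(x) → 0 and φ′(x) → 0 as x → −∞, for some ρ_V > 0 with ∂F/∂ρ(ρ_V, 0) = 0 (i.e. ρ_V is a critical point of the vapor bulk free energy). Then for every x ∈ ℝ the equipartition identity holds: (1/γ)W(φ(x)) + F(ρ(x),φ(x)) − F(ρ_V, 0) = (γ/2) φ′(x)². -/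
open Set Filter

lemma const_eq_limit_aux (f : ℝ → ℝ) (hf : ∀ x, HasDerivAt f 0 x) (c : ℝ)
    (hl : Tendsto f atBot (nhds c)) (x : ℝ) : f x = c := by
  have h : ∀ y, f y = f x := fun y =>
    is_const_of_deriv_eq_zero (fun z => (hf z).differentiableAt) (fun z => (hf z).deriv) y x
  have h2 : f = fun _ => f x := funext h
  rw [h2] at hl
  exact tendsto_nhds_unique tendsto_const_nhds hl

/-- **Equipartition identity for a planar equilibrium profile.**
For a planar static equilibrium of the compressible Navier–Stokes–Allen–Cahn model with
free energy density `F(ρ,φ) + (1/γ) W(φ) + (γ/2) φ′²`, with far-field vapor state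
`(ρ_V, 0)` at `x → −∞` and `∂F/∂ρ(ρ_V,0) = 0`, one has
`(1/γ) W(φ) + F(ρ,φ) − F(ρ_V,0) = (γ/2) φ′²` everywhere. -/
theorem equipartition_identity
    (γ : ℝ) (hγ : 0 < γ)
    (F : ℝ → ℝ → ℝ)
    (hF : ContDiffOn ℝ 2 (fun p : ℝ × ℝ => F p.1 p.2) (Ioi (0:ℝ) ×ˢ (univ : Set ℝ)))
    (W : ℝ → ℝ) (hW : W = fun s => s ^ 2 * (1 - s) ^ 2)
    (ρ φ : ℝ → ℝ)
    (hρ : ContDiff ℝ 2 ρ) (hφ : ContDiff ℝ 2 φ)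
    (hρpos : ∀ x, 0 < ρ x)
    (ode1 : ∀ x : ℝ,
      deriv (fun y =>
          -F (ρ y) (φ y) - (1/γ) * W (φ y) - (γ/2) * (deriv φ y) ^ 2
            + ρ y * deriv (fun r => F r (φ y)) (ρ y)) x
        = -γ * deriv (fun y => (deriv φ y) ^ 2) x)
    (ode2 : ∀ x : ℝ,
      (1/γ) * deriv W (φ x) + deriv (fun s => F (ρ x) s) (φ x)
        = γ * deriv (deriv φ) x)
    (ρV : ℝ) (hρV : 0 < ρV)
    (hlimρ : Tendsto ρ atBot (nhds ρV))
    (hlimφ : Tendsto φ atBot (nhds 0))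
    (hlimφ' : Tendsto (deriv φ) atBot (nhds 0))
    (hcrit : deriv (fun r => F r 0) ρV = 0) :
    ∀ x : ℝ,
      (1/γ) * W (φ x) + F (ρ x) (φ x) - F ρV 0 = (γ/2) * (deriv φ x) ^ 2 := by
  set U : Set (ℝ × ℝ) := Ioi (0:ℝ) ×ˢ (univ : Set ℝ) with hU
  have hUo : IsOpen U := isOpen_Ioi.prod isOpen_univ
  set G : ℝ × ℝ → ℝ := fun p => F p.1 p.2 with hG
  have hmem : ∀ r s : ℝ, 0 < r → (r, s) ∈ U := fun r s hr => ⟨hr, mem_univ _⟩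
  have hCD : ∀ p ∈ U, ContDiffAt ℝ 2 G p := fun p hp => hF.contDiffAt (hUo.mem_nhds hp)
  have hGd : ∀ p ∈ U, HasFDerivAt G (fderiv ℝ G p) p := fun p hp =>
    ((hCD p hp).differentiableAt (by norm_num)).hasFDerivAt
  have hG' : ∀ p ∈ U, DifferentiableAt ℝ (fderiv ℝ G) p := fun p hp =>
    ((hCD p hp).fderiv_right (m := 1) (by norm_num)).differentiableAt (by norm_num)
  have hp1 : ∀ r s : ℝ, 0 < r → deriv (fun r => F r s) r = fderiv ℝ G (r, s) (1, 0) := by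
    intro r s hr
    have h1 : HasDerivAt (fun t : ℝ => (t, s)) ((1:ℝ), (0:ℝ)) r :=
      (hasDerivAt_id r).prodMk (hasDerivAt_const r s)
    exact ((hGd (r, s) (hmem r s hr)).comp_hasDerivAt r h1).deriv
  have hp2 : ∀ r s : ℝ, 0 < r → deriv (fun s => F r s) s = fderiv ℝ G (r, s) (0, 1) := by
    intro r s hr
    have h1 : HasDerivAt (fun t : ℝ => (r, t)) ((0:ℝ), (1:ℝ)) s :=
      (hasDerivAt_const s r).prodMk (hasDerivAt_id s)
    exact ((hGd (r, s) (hmem r s hr)).comp_hasDerivAt s h1).deriv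
  have dρ : ∀ x, HasDerivAt ρ (deriv ρ x) x := fun x =>
    (hρ.differentiable (by norm_num) x).hasDerivAt
  have dφ : ∀ x, HasDerivAt φ (deriv φ x) x := fun x =>
    (hφ.differentiable (by norm_num) x).hasDerivAt
  have hφ1 : ContDiff ℝ 1 (deriv φ) := by
    have h : ContDiff ℝ (1 + 1) φ := by
      have : (1 + 1 : WithTop ℕ∞) = 2 := by norm_num
      rw [this]; exact hφ
    exact (contDiff_succ_iff_deriv.1 h).2.2
  have dφ' : ∀ x, HasDerivAt (deriv φ) (deriv (deriv φ) x) x := fun x =>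
    (hφ1.differentiable (by norm_num) x).hasDerivAt
  have dW : ∀ s, HasDerivAt W (deriv W s) s := by
    intro s
    have : DifferentiableAt ℝ W s := by rw [hW]; fun_prop
    exact this.hasDerivAt
  have dcurve : ∀ x, HasDerivAt (fun y => (ρ y, φ y)) (deriv ρ x, deriv φ x) x := fun x =>
    (dρ x).prodMk (dφ x)
  set μ : ℝ → ℝ := fun x => fderiv ℝ G (ρ x, φ x) (1, 0) with hμ
  set ν : ℝ → ℝ := fun x => fderiv ℝ G (ρ x, φ x) (0, 1) with hν
  have dF : ∀ x, HasDerivAt (fun y => F (ρ y) (φ y)) (μ x * deriv ρ x + ν x * deriv φ x) x := by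
    intro x
    have h := (hGd (ρ x, φ x) (hmem _ _ (hρpos x))).comp_hasDerivAt x (dcurve x)
    have e : fderiv ℝ G (ρ x, φ x) (deriv ρ x, deriv φ x)
        = μ x * deriv ρ x + ν x * deriv φ x := by
      have : ((deriv ρ x, deriv φ x) : ℝ × ℝ)
          = deriv ρ x • ((1:ℝ), (0:ℝ)) + deriv φ x • ((0:ℝ), (1:ℝ)) := by simp
      rw [this, map_add, map_smul, map_smul]
      simp only [smul_eq_mul, hμ, hν]; ring
    rw [e] at h
    exact h
  have dμ : ∀ x, HasDerivAt μ (deriv μ x) x := by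
    intro x
    have h := (hG' (ρ x, φ x) (hmem _ _ (hρpos x))).hasFDerivAt.comp_hasDerivAt x (dcurve x)
    exact (h.clm_apply (hasDerivAt_const x ((1:ℝ), (0:ℝ)))).differentiableAt.hasDerivAt
  have dWφ : ∀ x, HasDerivAt (fun y => (1/γ) * W (φ y)) ((1/γ) * (deriv W (φ x) * deriv φ x)) x :=
    fun x => ((dW (φ x)).comp x (dφ x)).const_mul _
  have dsq : ∀ x, HasDerivAt (fun y => (deriv φ y) ^ 2)
      (2 * deriv φ x * deriv (deriv φ) x) x := by
    intro x
    have h := (dφ' x).fun_pow 2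
    simpa using h
  have o2 : ∀ x, (1/γ) * deriv W (φ x) + ν x = γ * deriv (deriv φ) x := by
    intro x
    have h := ode2 x
    rwa [hp2 _ _ (hρpos x)] at h
  have hμ0 : ∀ x, deriv μ x = 0 := by
    intro x
    have h := ode1 x
    have e : (fun y => -F (ρ y) (φ y) - (1/γ) * W (φ y) - (γ/2) * (deriv φ y) ^ 2
            + ρ y * deriv (fun r => F r (φ y)) (ρ y))
        = fun y => -F (ρ y) (φ y) - (1/γ) * W (φ y) - (γ/2) * (deriv φ y) ^ 2
            + ρ y * μ y := by
      funext y
      rw [hp1 _ _ (hρpos y)]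
    have hd := ((((dF x).fun_neg).fun_sub (dWφ x)).fun_sub ((dsq x).const_mul (γ/2))).fun_add
      ((dρ x).fun_mul (dμ x))
    rw [e, hd.deriv, (dsq x).deriv] at h
    have h0 : ρ x * deriv μ x = 0 := by
      linear_combination h + deriv φ x * o2 x
    exact (mul_eq_zero.1 h0).resolve_left (hρpos x).ne'
  have hVU := hmem ρV 0 hρV
  have hlim : Tendsto (fun y => (ρ y, φ y)) atBot (nhds (ρV, 0)) := hlimρ.prodMk_nhds hlimφ
  have hμz : ∀ x, μ x = 0 := by
    refine const_eq_limit_aux μ (fun x => hμ0 x ▸ dμ x) 0 ?_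
    have h0 : ContinuousAt (fun p => fderiv ℝ G p ((1:ℝ), (0:ℝ))) (ρV, 0) :=
      (hG' _ hVU).continuousAt.clm_apply continuousAt_const
    have h1 := h0.tendsto.comp hlim
    rw [← hp1 _ _ hρV, hcrit] at h1
    exact h1
  intro x
  have key := const_eq_limit_aux
    (fun y => (1/γ) * W (φ y) + F (ρ y) (φ y) - (γ/2) * (deriv φ y) ^ 2) ?_ (F ρV 0) ?_ x
  · linarith
  · intro y
    have hd := ((dWφ y).fun_add (dF y)).fun_sub ((dsq y).const_mul (γ/2))
    refine hd.congr_deriv ?_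
    rw [hμz y]
    linear_combination deriv φ y * o2 y
  · have h1 : Tendsto (fun y => F (ρ y) (φ y)) atBot (nhds (F ρV 0)) :=
      (hGd _ hVU).continuousAt.tendsto.comp hlim
    have h2 : Tendsto (fun y => W (φ y)) atBot (nhds (W 0)) :=
      (dW 0).continuousAt.tendsto.comp hlimφ
    have h3 := ((h2.const_mul (1/γ)).add h1).sub ((hlimφ'.pow 2).const_mul (γ/2))
    have hW0 : W 0 = 0 := by rw [hW]; norm_num
    rw [hW0] at h3
    simpa using h3
end

section
/- Let γ > 0, let F : (0,∞) × ℝ → ℝ be C², and let W(s) = s²(1−s)². Suppose ρ : ℝ → (0,∞) and φ : ℝ → ℝ are twice continuously differentiable and satisfy, for all x ∈ ℝ, d/dx[ −F(ρ,φ) − (1/γ)W(φ) − (γ/2)φ′² + ρ·∂F/∂ρ(ρ,φ) ] = −γ d/dx[ φ′² ] and (1/γ)W′(φ) + ∂F/∂φ(ρ,φ) = γ φ″, together with the far-field conditions ρ(x) → ρ_V, φ(x) → 0, φ′(x) → 0 as x → −∞ and ρ(x) → ρ_L, φ(x) → 1, φ′(x) → 0 as x → +∞, where ρ_V, ρ_L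 > 0 and ∂F/∂ρ(ρ_V, 0) = 0. Then the bulk free energy densities of the two phases coincide: F(ρ_L, 1) = F(ρ_V, 0). -/
open Set Filter

/-- **Equality of the bulk free energy densities of the two phases.**
For a planar static equilibrium of the compressible Navier–Stokes–Allen–Cahn model
connecting the vapor state `(ρ_V, 0)` at `x → −∞` to the liquid state `(ρ_L, 1)` at
`x → +∞`, with `∂F/∂ρ(ρ_V,0) = 0`, one has `F(ρ_L,1) = F(ρ_V,0)`. -/
theorem bulk_free_energies_coincide
    (γ : ℝ) (hγ : 0 < γ)
    (F : ℝ → ℝ → ℝ)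
    (hF : ContDiffOn ℝ 2 (fun p : ℝ × ℝ => F p.1 p.2) (Ioi (0:ℝ) ×ˢ (univ : Set ℝ)))
    (W : ℝ → ℝ) (hW : W = fun s => s ^ 2 * (1 - s) ^ 2)
    (ρ φ : ℝ → ℝ)
    (hρ : ContDiff ℝ 2 ρ) (hφ : ContDiff ℝ 2 φ)
    (hρpos : ∀ x, 0 < ρ x)
    (ode1 : ∀ x : ℝ,
      deriv (fun y =>
          -F (ρ y) (φ y) - (1/γ) * W (φ y) - (γ/2) * (deriv φ y) ^ 2
            + ρ y * deriv (fun r => F r (φ y)) (ρ y)) x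
        = -γ * deriv (fun y => (deriv φ y) ^ 2) x)
    (ode2 : ∀ x : ℝ,
      (1/γ) * deriv W (φ x) + deriv (fun s => F (ρ x) s) (φ x)
        = γ * deriv (deriv φ) x)
    (ρV ρL : ℝ) (hρV : 0 < ρV) (hρL : 0 < ρL)
    (hlimρ : Tendsto ρ atBot (nhds ρV))
    (hlimφ : Tendsto φ atBot (nhds 0))
    (hlimφ' : Tendsto (deriv φ) atBot (nhds 0))
    (hlimρtop : Tendsto ρ atTop (nhds ρL))
    (hlimφtop : Tendsto φ atTop (nhds 1))
    (hlimφ'top : Tendsto (deriv φ) atTop (nhds 0))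
    (hcrit : deriv (fun r => F r 0) ρV = 0) :
    F ρL 1 = F ρV 0 := by
  have hopen : IsOpen (Ioi (0:ℝ) ×ˢ (univ : Set ℝ)) := isOpen_Ioi.prod isOpen_univ
  set Φ : ℝ × ℝ → ℝ := fun p => F p.1 p.2 with hΦ
  have hat : ∀ r s : ℝ, 0 < r → ContDiffAt ℝ 2 Φ (r, s) := fun r s hr =>
    hF.contDiffAt (hopen.mem_nhds ⟨hr, mem_univ _⟩)
  have hfd : ∀ r s : ℝ, 0 < r → HasFDerivAt Φ (fderiv ℝ Φ (r, s)) (r, s) := fun r s hr =>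
    ((hat r s hr).differentiableAt (by norm_num)).hasFDerivAt
  have hfd1 : ∀ r s : ℝ, 0 < r → DifferentiableAt ℝ (fderiv ℝ Φ) (r, s) := fun r s hr =>
    ((hat r s hr).fderiv_right (m := 1) (by norm_num)).differentiableAt (by norm_num)
  have hd1 : ∀ r s : ℝ, 0 < r → deriv (fun t => F t s) r = fderiv ℝ Φ (r, s) (1, 0) := by
    intro r s hr
    have h := (hfd r s hr).comp_hasDerivAt r ((hasDerivAt_id r).prodMk (hasDerivAt_const r s))
    exact h.deriv
  have hd2 : ∀ r s : ℝ, 0 < r → deriv (fun t => F r t) s = fderiv ℝ Φ (r, s) (0, 1) := by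
    intro r s hr
    have h := (hfd r s hr).comp_hasDerivAt s ((hasDerivAt_const s r).prodMk (hasDerivAt_id s))
    exact h.deriv
  have hρd : ∀ x, HasDerivAt ρ (deriv ρ x) x := fun x =>
    ((hρ.differentiable (by norm_num)) x).hasDerivAt
  have hφd : ∀ x, HasDerivAt φ (deriv φ x) x := fun x =>
    ((hφ.differentiable (by norm_num)) x).hasDerivAt
  have hφ1 : ContDiff ℝ 1 (deriv φ) := by
    have h2 : ContDiff ℝ (1 + 1) φ := by
      have : (1 + 1 : WithTop ℕ∞) = 2 := by norm_num
      rw [this]; exact hφ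
    exact (contDiff_succ_iff_deriv.1 h2).2.2
  have hφdd : ∀ x, HasDerivAt (deriv φ) (deriv (deriv φ) x) x := fun x =>
    ((hφ1.differentiable (by norm_num)) x).hasDerivAt
  have hWdiff : Differentiable ℝ W := by rw [hW]; fun_prop
  have hWd : ∀ s, HasDerivAt W (deriv W s) s := fun s => (hWdiff s).hasDerivAt
  set μ : ℝ → ℝ := fun y => deriv (fun r => F r (φ y)) (ρ y) with hμ
  have hμeq : μ = fun y => fderiv ℝ Φ (ρ y, φ y) (1, 0) := by
    funext y; exact hd1 _ _ (hρpos y)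
  have hμdiff : Differentiable ℝ μ := by
    intro x
    rw [hμeq]
    have h1 : DifferentiableAt ℝ (fun y => fderiv ℝ Φ (ρ y, φ y)) x :=
      DifferentiableAt.comp x (f := fun y => (ρ y, φ y)) (hfd1 _ _ (hρpos x))
        ((hρd x).differentiableAt.prodMk (hφd x).differentiableAt)
    exact h1.clm_apply (differentiableAt_const _)
  have hμd : ∀ x, HasDerivAt μ (deriv μ x) x := fun x => (hμdiff x).hasDerivAt
  have hFd : ∀ x, HasDerivAt (fun y => F (ρ y) (φ y))
      (deriv ρ x * μ x + deriv φ x * deriv (fun s => F (ρ x) s) (φ x)) x := by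
    intro x
    have h := (hfd (ρ x) (φ x) (hρpos x)).comp_hasDerivAt x ((hρd x).prodMk (hφd x))
    have e : ((deriv ρ x, deriv φ x) : ℝ × ℝ)
        = deriv ρ x • ((1, 0) : ℝ × ℝ) + deriv φ x • ((0, 1) : ℝ × ℝ) := by
      simp
    rw [e, map_add, map_smul, map_smul, ← hd1 _ _ (hρpos x), ← hd2 _ _ (hρpos x)] at h
    exact h
  have hsq : ∀ x, HasDerivAt (fun y => (deriv φ y) ^ 2)
      (2 * deriv φ x * deriv (deriv φ) x) x := by
    intro x
    have h := (hφdd x).pow 2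
    exact h.congr_deriv (by norm_num)
  have hG : ∀ x, HasDerivAt (fun y =>
      -F (ρ y) (φ y) - (1/γ) * W (φ y) - (γ/2) * (deriv φ y) ^ 2 + ρ y * μ y)
      (-(deriv ρ x * μ x + deriv φ x * deriv (fun s => F (ρ x) s) (φ x))
        - (1/γ) * (deriv W (φ x) * deriv φ x)
        - (γ/2) * (2 * deriv φ x * deriv (deriv φ) x)
        + (deriv ρ x * μ x + ρ x * deriv μ x)) x := by
    intro x
    have hw : HasDerivAt (fun y => W (φ y)) (deriv W (φ x) * deriv φ x) x :=
      (hWd (φ x)).comp x (hφd x)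
    exact (((hFd x).neg.sub (hw.const_mul (1/γ))).sub ((hsq x).const_mul (γ/2))).add
      ((hρd x).mul (hμd x))
  have hμ0' : ∀ x, deriv μ x = 0 := by
    intro x
    have h1 := ode1 x
    rw [(hG x).deriv, (hsq x).deriv] at h1
    have h2 := ode2 x
    have h3 : ρ x * deriv μ x = 0 := by linear_combination h1 + deriv φ x * h2
    exact (mul_eq_zero.1 h3).resolve_left (hρpos x).ne'
  have hμc : ∀ x, μ x = μ 0 := fun x => is_const_of_deriv_eq_zero hμdiff hμ0' x 0
  have hμlim : Tendsto μ atBot (nhds 0) := by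
    rw [← hcrit, hd1 _ _ hρV, hμeq]
    have hc : ContinuousAt (fun p => fderiv ℝ Φ p (1, 0)) (ρV, (0:ℝ)) :=
      (hfd1 ρV 0 hρV).continuousAt.clm_apply continuousAt_const
    exact hc.tendsto.comp (hlimρ.prodMk_nhds hlimφ)
  have hμz : ∀ x, μ x = 0 := by
    have : Tendsto μ atBot (nhds (μ 0)) := by
      rw [show μ = fun _ => μ 0 from funext hμc]; exact tendsto_const_nhds
    intro x
    rw [hμc x]; exact tendsto_nhds_unique this hμlim
  set E : ℝ → ℝ := fun y =>
    F (ρ y) (φ y) + (1/γ) * W (φ y) - (γ/2) * (deriv φ y) ^ 2 with hE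
  have hEd : ∀ x, HasDerivAt E 0 x := by
    intro x
    have hw : HasDerivAt (fun y => W (φ y)) (deriv W (φ x) * deriv φ x) x :=
      (hWd (φ x)).comp x (hφd x)
    have h := ((hFd x).add (hw.const_mul (1/γ))).sub ((hsq x).const_mul (γ/2))
    refine h.congr_deriv ?_
    linear_combination deriv φ x * ode2 x + deriv ρ x * hμz x
  have hEc : ∀ x, E x = E 0 := fun x =>
    is_const_of_deriv_eq_zero (fun y => (hEd y).differentiableAt) (fun y => (hEd y).deriv) x 0
  have key : ∀ (l : Filter ℝ) [l.NeBot] (r s : ℝ), 0 < r → W s = 0 → Tendsto ρ l (nhds r) →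
      Tendsto φ l (nhds s) → Tendsto (deriv φ) l (nhds 0) → F r s = E 0 := by
    intro l _ r s hr hs h1 h2 h3
    have hf : Tendsto (fun y => F (ρ y) (φ y)) l (nhds (F r s)) :=
      (hat r s hr).continuousAt.tendsto.comp (h1.prodMk_nhds h2)
    have hw : Tendsto (fun y => W (φ y)) l (nhds (W s)) :=
      (hWd s).continuousAt.tendsto.comp h2
    have h := (hf.add (hw.const_mul (1/γ))).sub ((h3.pow 2).const_mul (γ/2))
    have hc : Tendsto E l (nhds (E 0)) := by
      rw [show E = fun _ => E 0 from funext hEc]; exact tendsto_const_nhds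
    have := tendsto_nhds_unique h hc
    rw [hs] at this
    simpa using this
  rw [key atTop ρL 1 hρL (by simp [hW]) hlimρtop hlimφtop hlimφ'top,
    key atBot ρV 0 hρV (by simp [hW]) hlimρ hlimφ hlimφ']
end

section
/- Let γ > 0, let F : (0,∞) × ℝ → ℝ be C², and let W(s) = s²(1−s)². Suppose ρ : ℝ → (0,∞), φ : ℝ → ℝ are twice continuously differentiable solutions of the planar equilibrium equations d/dx[ −F(ρ,φ) − (1/γ)W(φ) − (γ/2)φ′² + ρ·∂F/∂ρ(ρ,φ) ] = −γ d/dx[ φ′² ] and (1/γ)W′(φ) + ∂F/∂φ(ρ,φ) = γ φ″, with ρ(x) → ρ_V, φ(x) → 0, φ′(x) → 0 as x → −∞, ρ(x) → ρ_L, φ(x) → 1, φ′(x) → 0 as x → +∞, and ∂F/∂ρ(ρ_V, 0) = 0. Assume x ↦ φ′(x)² is integrable on ℝ. Then for every choice of dividing-interface position x₀ ∈ ℝ, the excess free energy ∫_{−∞}^{x₀} [ F(ρ,φ) + (1/γ)W(φ) + (γ/2)φ′² − F(ρ_V,0) ] dx + ∫_{x₀}^{∞} [ F(ρ,φ) + (1/γ)W(φ)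 + (γ/2)φ′² − F(ρ_L,1) ] dx is well defined (both integrals converge) and equals ∫_{−∞}^{∞} γ φ′(x)² dx; in particular it is independent of x₀. -/
open Set Filter MeasureTheory

/-- **Surface tension as excess free energy.**
For a planar static equilibrium profile of the compressible Navier–Stokes–Allen–Cahn
model connecting the vapor state `(ρ_V,0)` at `−∞` to the liquid state `(ρ_L,1)` at
`+∞`, and for every dividing-interface position `x₀`, the excess free energy (relative
to the sharp-interface reference state) is well defined and equals `∫ γ φ′² dx`;
in particular it is independent of `x₀`. -/
theorem excess_free_energy_eq_gradient_energy
    (γ : ℝ) (hγ : 0 < γ)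
    (F : ℝ → ℝ → ℝ)
    (hF : ContDiffOn ℝ 2 (fun p : ℝ × ℝ => F p.1 p.2) (Ioi (0:ℝ) ×ˢ (univ : Set ℝ)))
    (W : ℝ → ℝ) (hW : W = fun s => s ^ 2 * (1 - s) ^ 2)
    (ρ φ : ℝ → ℝ)
    (hρ : ContDiff ℝ 2 ρ) (hφ : ContDiff ℝ 2 φ)
    (hρpos : ∀ x, 0 < ρ x)
    (ode1 : ∀ x : ℝ,
      deriv (fun y =>
          -F (ρ y) (φ y) - (1/γ) * W (φ y) - (γ/2) * (deriv φ y) ^ 2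
            + ρ y * deriv (fun r => F r (φ y)) (ρ y)) x
        = -γ * deriv (fun y => (deriv φ y) ^ 2) x)
    (ode2 : ∀ x : ℝ,
      (1/γ) * deriv W (φ x) + deriv (fun s => F (ρ x) s) (φ x)
        = γ * deriv (deriv φ) x)
    (ρV ρL : ℝ) (hρV : 0 < ρV) (hρL : 0 < ρL)
    (hlimρ : Tendsto ρ atBot (nhds ρV))
    (hlimφ : Tendsto φ atBot (nhds 0))
    (hlimφ' : Tendsto (deriv φ) atBot (nhds 0))
    (hlimρtop : Tendsto ρ atTop (nhds ρL))
    (hlimφtop : Tendsto φ atTop (nhds 1))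
    (hlimφ'top : Tendsto (deriv φ) atTop (nhds 0))
    (hcrit : deriv (fun r => F r 0) ρV = 0)
    (hint : Integrable (fun x => (deriv φ x) ^ 2)) :
    ∀ x₀ : ℝ,
      IntegrableOn
        (fun x => F (ρ x) (φ x) + (1/γ) * W (φ x) + (γ/2) * (deriv φ x) ^ 2 - F ρV 0)
        (Iic x₀) ∧
      IntegrableOn
        (fun x => F (ρ x) (φ x) + (1/γ) * W (φ x) + (γ/2) * (deriv φ x) ^ 2 - F ρL 1)
        (Ici x₀) ∧
      (∫ x in Iic x₀,
          (F (ρ x) (φ x) + (1/γ) * W (φ x) + (γ/2) * (deriv φ x) ^ 2 - F ρV 0)) +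
        (∫ x in Ici x₀,
          (F (ρ x) (φ x) + (1/γ) * W (φ x) + (γ/2) * (deriv φ x) ^ 2 - F ρL 1))
        = ∫ x : ℝ, γ * (deriv φ x) ^ 2 := by
  set f : ℝ × ℝ → ℝ := fun p => F p.1 p.2 with hf
  set S : Set (ℝ × ℝ) := Ioi (0:ℝ) ×ˢ (univ : Set ℝ) with hS
  have hSo : IsOpen S := isOpen_Ioi.prod isOpen_univ
  have hmem : ∀ r s : ℝ, 0 < r → (r, s) ∈ S := fun r s hr => ⟨hr, mem_univ _⟩
  have hfd : ∀ r s : ℝ, 0 < r → HasFDerivAt f (fderiv ℝ f (r, s)) (r, s) := fun r s hr =>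
    ((hF.differentiableOn (by norm_num)).differentiableAt
      (hSo.mem_nhds (hmem r s hr))).hasFDerivAt
  have hdf : ContDiffOn ℝ 1 (fderiv ℝ f) S := hF.fderiv_of_isOpen hSo (by norm_num)
  have hdr : ∀ r s : ℝ, 0 < r → deriv (fun r => F r s) r = fderiv ℝ f (r, s) (1, 0) := by
    intro r s hr
    have h1 : HasDerivAt (fun t : ℝ => (t, s)) ((1:ℝ), (0:ℝ)) r :=
      (hasDerivAt_id r).prodMk (hasDerivAt_const r s)
    exact ((hfd r s hr).comp_hasDerivAt r h1).deriv
  have hds : ∀ r s : ℝ, 0 < r → deriv (fun s => F r s) s = fderiv ℝ f (r, s) (0, 1) := by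
    intro r s hr
    have h1 : HasDerivAt (fun t : ℝ => (r, t)) ((0:ℝ), (1:ℝ)) s :=
      (hasDerivAt_const s r).prodMk (hasDerivAt_id s)
    exact ((hfd r s hr).comp_hasDerivAt s h1).deriv
  have hρd : ∀ x, HasDerivAt ρ (deriv ρ x) x := fun x =>
    (hρ.differentiable (by norm_num) x).hasDerivAt
  have hφd : ∀ x, HasDerivAt φ (deriv φ x) x := fun x =>
    (hφ.differentiable (by norm_num) x).hasDerivAt
  have hφ1 : ContDiff ℝ 1 (deriv φ) :=
    ((contDiff_succ_iff_deriv (n := 1)).1 (by simpa [one_add_one_eq_two] using hφ)).2.2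
  have hφdd : ∀ x, HasDerivAt (deriv φ) (deriv (deriv φ) x) x := fun x =>
    (hφ1.differentiable (by norm_num) x).hasDerivAt
  have hWd : ∀ s, HasDerivAt W (deriv W s) s := by
    intro s
    have : Differentiable ℝ W := by rw [hW]; fun_prop
    exact (this s).hasDerivAt
  have hpd : ∀ x, HasDerivAt (fun y => (ρ y, φ y)) (deriv ρ x, deriv φ x) x := fun x =>
    (hρd x).prodMk (hφd x)
  -- the chemical potential along the profile
  set G : ℝ → ℝ := fun y => deriv (fun r => F r (φ y)) (ρ y) with hG
  have hGe : ∀ y, G y = fderiv ℝ f (ρ y, φ y) (1, 0) := fun y => hdr _ _ (hρpos y)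
  have hGd : ∀ x, HasDerivAt G (deriv G x) x := by
    intro x
    have h1 : DifferentiableAt ℝ (fderiv ℝ f) (ρ x, φ x) :=
      (hdf.differentiableOn (by norm_num)).differentiableAt
        (hSo.mem_nhds (hmem _ _ (hρpos x)))
    have h2 : DifferentiableAt ℝ (fun y => fderiv ℝ f (ρ y, φ y)) x :=
      DifferentiableAt.comp (f := fun y => (ρ y, φ y)) x h1 (hpd x).differentiableAt
    have h3 : G = fun y => fderiv ℝ f (ρ y, φ y) (1, 0) := funext hGe
    have h4 : DifferentiableAt ℝ G x := by
      rw [h3]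
      exact h2.clm_apply (differentiableAt_const _)
    exact h4.hasDerivAt
  have hFd : ∀ x, HasDerivAt (fun y => F (ρ y) (φ y))
      (G x * deriv ρ x + deriv (fun s => F (ρ x) s) (φ x) * deriv φ x) x := by
    intro x
    have h := (hfd (ρ x) (φ x) (hρpos x)).comp_hasDerivAt x (hpd x)
    have e : fderiv ℝ f (ρ x, φ x) (deriv ρ x, deriv φ x)
        = G x * deriv ρ x + deriv (fun s => F (ρ x) s) (φ x) * deriv φ x := by
      rw [hGe, hds _ _ (hρpos x)]
      have : ((deriv ρ x, deriv φ x) : ℝ × ℝ)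
          = deriv ρ x • ((1:ℝ), (0:ℝ)) + deriv φ x • ((0:ℝ), (1:ℝ)) := by simp
      rw [this, map_add, map_smul, map_smul, smul_eq_mul, smul_eq_mul]
      ring
    rw [e] at h
    exact h
  have hWφ : ∀ x, HasDerivAt (fun y => W (φ y)) (deriv W (φ x) * deriv φ x) x := fun x =>
    (hWd (φ x)).comp x (hφd x)
  have hsq : ∀ x, HasDerivAt (fun y => (deriv φ y) ^ 2)
      (2 * deriv φ x * deriv (deriv φ) x) x := by
    intro x
    refine ((hφdd x).fun_pow 2).congr_deriv ?_
    norm_num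
  have hG0' : ∀ x, deriv G x = 0 := by
    intro x
    have h1 := ((((hFd x).neg.sub ((hWφ x).const_mul (1/γ))).sub
      ((hsq x).const_mul (γ/2))).add ((hρd x).mul (hGd x))).deriv
    have h2 := ode1 x
    rw [(hsq x).deriv] at h2
    have h3 := h1.symm.trans h2
    have h4 := ode2 x
    have h5 : ρ x * deriv G x = 0 := by
      linear_combination h3 + deriv φ x * h4
    exact (mul_eq_zero.1 h5).resolve_left (hρpos x).ne'
  have hGlim : Tendsto G atBot (nhds 0) := by
    have h1 : ContinuousAt (fderiv ℝ f) (ρV, 0) :=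
      hdf.continuousOn.continuousAt (hSo.mem_nhds (hmem _ _ hρV))
    have h2 := h1.tendsto.comp (hlimρ.prodMk_nhds hlimφ)
    have h3 : Tendsto (fun y => fderiv ℝ f (ρ y, φ y) (1, 0)) atBot
        (nhds (fderiv ℝ f (ρV, 0) (1, 0))) :=
      ((ContinuousLinearMap.apply ℝ ℝ ((1:ℝ), (0:ℝ))).continuous.tendsto _).comp h2
    rw [← hdr _ _ hρV, hcrit] at h3
    exact h3.congr fun y => (hGe y).symm
  have hG0 : ∀ x, G x = 0 := by
    intro x
    have hc : ∀ y, G y = G x := fun y =>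
      is_const_of_deriv_eq_zero (fun x => (hGd x).differentiableAt) hG0' y x
    exact tendsto_nhds_unique (tendsto_const_nhds.congr fun y => (hc y).symm) hGlim
  -- the first integral
  set E : ℝ → ℝ := fun y => F (ρ y) (φ y) + (1/γ) * W (φ y) - (γ/2) * (deriv φ y) ^ 2 with hE
  have hEd : ∀ x, HasDerivAt E 0 x := by
    intro x
    have h1 := ((hFd x).add ((hWφ x).const_mul (1/γ))).sub ((hsq x).const_mul (γ/2))
    refine h1.congr_deriv ?_
    rw [hG0]
    linear_combination deriv φ x * ode2 x
  have hElim : ∀ (l : Filter ℝ) (a b : ℝ), 0 < a → W b = 0 → Tendsto ρ l (nhds a) →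
      Tendsto φ l (nhds b) → Tendsto (deriv φ) l (nhds 0) → Tendsto E l (nhds (F a b)) := by
    intro l a b ha hb h1 h2 h3
    have k1 : Tendsto (fun y => F (ρ y) (φ y)) l (nhds (F a b)) :=
      (hfd a b ha).continuousAt.tendsto.comp (h1.prodMk_nhds h2)
    have k2 : Tendsto (fun y => W (φ y)) l (nhds (W b)) :=
      (hWd b).continuousAt.tendsto.comp h2
    have k3 := (k1.add (k2.const_mul (1/γ))).sub ((h3.pow 2).const_mul (γ/2))
    simpa [hb, hE] using k3
  have hEc : ∀ x y, E x = E y := fun x y =>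
    is_const_of_deriv_eq_zero (fun x => (hEd x).differentiableAt) (fun x => (hEd x).deriv) x y
  have hEV : ∀ x, E x = F ρV 0 := fun x =>
    tendsto_nhds_unique (tendsto_const_nhds.congr fun y => hEc x y)
      (hElim atBot ρV 0 hρV (by simp [hW]) hlimρ hlimφ hlimφ')
  have hEL : ∀ x, E x = F ρL 1 := fun x =>
    tendsto_nhds_unique (tendsto_const_nhds.congr fun y => hEc x y)
      (hElim atTop ρL 1 hρL (by simp [hW]) hlimρtop hlimφtop hlimφ'top)
  have e1 : (fun x => F (ρ x) (φ x) + (1/γ) * W (φ x) + (γ/2) * (deriv φ x) ^ 2 - F ρV 0)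
      = fun x => γ * (deriv φ x) ^ 2 := by
    funext x
    rw [← hEV x]
    simp only [hE]
    ring
  have e2 : (fun x => F (ρ x) (φ x) + (1/γ) * W (φ x) + (γ/2) * (deriv φ x) ^ 2 - F ρL 1)
      = fun x => γ * (deriv φ x) ^ 2 := by
    funext x
    rw [← hEL x]
    simp only [hE]
    ring
  have hi : Integrable (fun x => γ * (deriv φ x) ^ 2) := hint.const_mul γ
  intro x₀
  rw [e1, e2]
  refine ⟨hi.integrableOn, hi.integrableOn, ?_⟩
  rw [integral_Ici_eq_integral_Ioi]
  exact intervalIntegral.integral_Iic_add_Ioi hi.integrableOn hi.integrableOn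
end

section
/- Let γ > 0, F : (0,∞) × ℝ → ℝ be C², W(s) = s²(1−s)², and let ρ : ℝ → (0,∞), φ : ℝ → ℝ be a twice continuously differentiable planar equilibrium profile satisfying the equipartition identity (1/γ)W(φ(x)) + F(ρ(x),φ(x)) − c̄ = (γ/2) φ′(x)² for all x ∈ ℝ, where c̄ := F(ρ_V,0) is the common bulk free energy value, and with φ(x) → 0 as x → −∞ and φ(x) → 1 as x → +∞. Assume moreover that φ′(x) > 0 for all x, so that φ : ℝ → (0,1) is a strictly increasing bijection, and let R : (0,1) → (0,∞) be defined by R := ρ ∘ φ⁻¹. If x ↦ φ′(x)² is integrable on ℝ, then ∫_{−∞}^{∞} γ φ′(x)² dx = √2 ∫_0^1 √( W(s) + γ (F(R(s), s) − c̄) ) ds. -/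
open Set Filter MeasureTheory

/-- **Surface tension formula via the phase-field variable.**
For a planar equilibrium profile satisfying the equipartition identity and connecting
`φ = 0` (density `ρ_V`) at `−∞` to `φ = 1` at `+∞`, with `φ′ > 0` everywhere so that
`φ : ℝ → (0,1)` is a strictly increasing bijection, and with `R = ρ ∘ φ⁻¹`, one has
`∫ γ φ′² dx = √2 ∫₀¹ √(W(s) + γ (F(R(s), s) − c̄)) ds` where `c̄ = F(ρ_V, 0)`. -/
theorem surface_tension_formula
    (γ : ℝ) (hγ : 0 < γ)
    (F : ℝ → ℝ → ℝ)
    (hF : ContDiffOn ℝ 2 (fun p : ℝ × ℝ => F p.1 p.2) (Ioi (0:ℝ) ×ˢ (univ : Set ℝ)))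
    (W : ℝ → ℝ) (hW : W = fun s => s ^ 2 * (1 - s) ^ 2)
    (ρ φ : ℝ → ℝ)
    (hρ : ContDiff ℝ 2 ρ) (hφ : ContDiff ℝ 2 φ)
    (hρpos : ∀ x, 0 < ρ x)
    (ρV : ℝ) (hρV : 0 < ρV)
    (equip : ∀ x : ℝ,
      (1/γ) * W (φ x) + F (ρ x) (φ x) - F ρV 0 = (γ/2) * (deriv φ x) ^ 2)
    (hlimφ : Tendsto φ atBot (nhds 0))
    (hlimφtop : Tendsto φ atTop (nhds 1))
    (hφ'pos : ∀ x, 0 < deriv φ x)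
    (hmono : StrictMono φ)
    (hbij : BijOn φ univ (Ioo (0:ℝ) 1))
    (R : ℝ → ℝ)
    (hR : ∀ x : ℝ, R (φ x) = ρ x)
    (hRpos : ∀ s ∈ Ioo (0:ℝ) 1, 0 < R s)
    (hint : Integrable (fun x => (deriv φ x) ^ 2)) :
    (∫ x : ℝ, γ * (deriv φ x) ^ 2)
      = Real.sqrt 2 * ∫ s in (0:ℝ)..1, Real.sqrt (W s + γ * (F (R s) s - F ρV 0)) := by
  have key : ∀ x, Real.sqrt 2 * Real.sqrt (W (φ x) + γ * (F (R (φ x)) (φ x) - F ρV 0))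
      = γ * deriv φ x := by
    intro x
    have h1 : W (φ x) + γ * (F (ρ x) (φ x) - F ρV 0) = γ ^ 2 / 2 * (deriv φ x) ^ 2 := by
      have h2 : γ * ((1/γ) * W (φ x) + F (ρ x) (φ x) - F ρV 0)
          = γ * ((γ/2) * (deriv φ x) ^ 2) := by rw [equip x]
      have h3 : γ * (1 / γ) = 1 := mul_one_div_cancel hγ.ne'
      linear_combination h2 - W (φ x) * h3
    rw [hR, h1, ← Real.sqrt_mul (by norm_num)]
    have h4 : 2 * (γ ^ 2 / 2 * (deriv φ x) ^ 2) = (γ * deriv φ x) ^ 2 := by ring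
    rw [h4, Real.sqrt_sq (mul_pos hγ (hφ'pos x)).le]
  have hd : ∀ x ∈ (univ : Set ℝ), HasDerivWithinAt φ (deriv φ x) univ x := fun x _ =>
    ((hφ.differentiable (by norm_num)) x).hasDerivAt.hasDerivWithinAt
  have cv := integral_image_eq_integral_abs_deriv_smul MeasurableSet.univ hd hbij.injOn
    (fun s => Real.sqrt 2 * Real.sqrt (W s + γ * (F (R s) s - F ρV 0)))
  rw [hbij.image_eq] at cv
  rw [intervalIntegral.integral_of_le zero_le_one, integral_Ioc_eq_integral_Ioo,
    ← integral_const_mul, cv, setIntegral_univ]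
  refine integral_congr_ae (Eventually.of_forall fun x => ?_)
  simp only [key, abs_of_pos (hφ'pos x), smul_eq_mul]
  ring
end
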